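/- Let k be a positive integer with at least 2828 distinct prime factors. Then the number of squarefree divisors of k satisfies W(k) < k^{1/13}. -/

import Mathlib

/-!
Raising to the 13th power, the claim reads `8192 ^ ω(k) < k`, and `k` is at least the product of
its prime factors. In a set of primes, exchanging a member `> N` for a missing prime `≤ N` only
lowers the product. So with `N = 25673`, the 2828th prime, the product of any `r ≥ 2828` primes is
at least the primorial of `N` times `N ^ (r - 2828)`. As `8192 ≤ N`, everything reduces to the
numerical inequality `8192 ^ 2828 < N#`.
-/

open Finset

section Exchange

variable {ι M : Type*} [CommMonoid M] [PartialOrder M] [IsOrderedMonoid M]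

theorem prod_mul_pow_card_sub_card_le_prod [DecidableEq ι] {s t : Finset ι} {f : ι → M} {b : M}
    (hst : #s ≤ #t) (hs : ∀ i ∈ s \ t, f i ≤ b) (ht : ∀ i ∈ t \ s, b ≤ f i) :
    (∏ i ∈ s, f i) * b ^ (#t - #s) ≤ ∏ i ∈ t, f i := by
  have hcard : #(s \ t) + (#t - #s) = #(t \ s) := by
    have hs' := card_sdiff_add_card_inter s t
    have ht' := card_sdiff_add_card_inter t s
    rw [inter_comm] at ht'
    omega
  calc (∏ i ∈ s, f i) * b ^ (#t - #s)
      = (∏ i ∈ s ∩ t, f i) * ((∏ i ∈ s \ t, f i) * b ^ (#t - #s)) := by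
        rw [← prod_inter_mul_prod_sdiff s t, mul_assoc]
    _ ≤ (∏ i ∈ s ∩ t, f i) * (b ^ #(s \ t) * b ^ (#t - #s)) := by
        gcongr
        exact prod_le_pow_card _ _ _ hs
    _ = (∏ i ∈ t ∩ s, f i) * b ^ #(t \ s) := by rw [← pow_add, hcard, inter_comm]
    _ ≤ (∏ i ∈ t ∩ s, f i) * ∏ i ∈ t \ s, f i := by
        gcongr
        exact pow_card_le_prod _ _ _ ht
    _ = ∏ i ∈ t, f i := prod_inter_mul_prod_sdiff t s f

end Exchange

section Primorial

variable {c N : ℕ}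

theorem primorial_mul_pow_le_prod_primes {s : Finset ℕ} (hs : ∀ p ∈ s, p.Prime)
    (hcard : N.primeCounting ≤ #s) :
    primorial N * N ^ (#s - N.primeCounting) ≤ ∏ p ∈ s, p := by
  rw [← Nat.primesLE_card_eq_primeCounting] at hcard ⊢
  refine prod_mul_pow_card_sub_card_le_prod hcard
    (fun p hp => Nat.le_of_mem_primesLE (mem_sdiff.1 hp).1) fun p hp => ?_
  obtain ⟨hps, hpN⟩ := mem_sdiff.1 hp
  exact le_of_not_ge fun hle => hpN (Nat.mem_primesLE.2 ⟨hle, hs p hps⟩)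

theorem pow_card_lt_prod_primes_of_lt_primorial (hcN : c ≤ N)
    (hc : c ^ N.primeCounting < primorial N) {s : Finset ℕ} (hs : ∀ p ∈ s, p.Prime)
    (hcard : N.primeCounting ≤ #s) :
    c ^ #s < ∏ p ∈ s, p := by
  obtain rfl | hN := N.eq_zero_or_pos
  · simp at hc
  calc c ^ #s = c ^ N.primeCounting * c ^ (#s - N.primeCounting) := by
        rw [← pow_add, Nat.add_sub_cancel' hcard]
    _ ≤ c ^ N.primeCounting * N ^ (#s - N.primeCounting) := by gcongr
    _ < primorial N * N ^ (#s - N.primeCounting) := by gcongr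
    _ ≤ ∏ p ∈ s, p := primorial_mul_pow_le_prod_primes hs hcard

theorem pow_card_primeFactors_lt_of_lt_primorial (hcN : c ≤ N)
    (hc : c ^ N.primeCounting < primorial N) {k : ℕ} (hk : k ≠ 0)
    (hcard : N.primeCounting ≤ #k.primeFactors) :
    c ^ #k.primeFactors < k :=
  (pow_card_lt_prod_primes_of_lt_primorial hcN hc (fun _ => Nat.prime_of_mem_primeFactors)
    hcard).trans_le (Nat.le_of_dvd hk.bot_lt (Nat.prod_primeFactors_dvd k))

end Primorial

section Sieve

/-- Trial division of `n` by the primes up to `m`, all at once through a gcd with their product `P`.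
The product is a separate argument so that kernel computation can use its decimal value. -/
abbrev PassesTrialDivision (m P n : ℕ) : Prop :=
  if n ≤ m then n.Prime else P.Coprime n

theorem prime_iff_passesTrialDivision {m n : ℕ} (hn : n < (m + 1) ^ 2) :
    n.Prime ↔ PassesTrialDivision m (primorial m) n := by
  unfold PassesTrialDivision
  split_ifs with hnm
  · rfl
  constructor
  · intro hp
    exact (hp.coprime_iff_not_dvd.2 (hp.dvd_primorial_iff.not.2 hnm)).symm
  · intro hcop
    by_contra hnp
    have hn1 : n ≠ 1 := by rintro rfl; simp_all
    have hq : n.minFac.Prime := Nat.minFac_prime hn1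
    have hqm : n.minFac ≤ m := Nat.lt_succ_iff.1 <|
      lt_of_pow_lt_pow_left₀ 2 (Nat.zero_le _)
        ((Nat.minFac_sq_le_self (by omega) hnp).trans_lt hn)
    exact Nat.not_coprime_of_dvd_of_dvd hq.one_lt (hq.dvd_primorial_iff.2 hqm) n.minFac_dvd hcop

/-- The values of `f` on `[a, a + 2 ^ d)` combined by `op` in a balanced binary tree, which keeps
the recursion depth of a kernel evaluation at `d`. -/
def dyadicFold {M : Type*} (op : M → M → M) (f : ℕ → M) : ℕ → ℕ → M
  | 0, a => f a
  | d + 1, a => op (dyadicFold op f d a) (dyadicFold op f d (a + 2 ^ d))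

variable {M : Type*} [CommMonoid M]

@[to_additive]
theorem dyadicFold_mul_eq_prod_Ico (f : ℕ → M) (d a : ℕ) :
    dyadicFold (· * ·) f d a = ∏ n ∈ Ico a (a + 2 ^ d), f n := by
  induction d generalizing a with
  | zero => simp [dyadicFold]
  | succ d ih =>
    rw [dyadicFold, ih, ih,
      prod_Ico_consecutive f (Nat.le_add_right _ _) (Nat.le_add_right _ _), add_assoc, ← two_mul,
      ← pow_succ']

@[to_additive]
theorem prod_primesLE_eq_dyadicFold {N m d : ℕ} (hd : N < 2 ^ d) (hm : N < (m + 1) ^ 2)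
    (f : ℕ → M) :
    ∏ p ∈ N.primesLE, f p = dyadicFold (· * ·)
      (fun n => if n ≤ N ∧ PassesTrialDivision m (primorial m) n then f n else 1) d 0 := by
  rw [dyadicFold_mul_eq_prod_Ico, ← prod_filter]
  congr 1
  ext n
  rw [Nat.mem_primesLE, mem_filter, mem_Ico]
  constructor
  · rintro ⟨hnN, hp⟩
    exact ⟨by omega, hnN, (prime_iff_passesTrialDivision (by omega)).1 hp⟩
  · rintro ⟨-, hnN, htrial⟩
    exact ⟨hnN, (prime_iff_passesTrialDivision (by omega)).2 htrial⟩

end Sieve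

theorem primorial_160 :
    primorial 160 = 35375166993717494840635767087951744212057570647889977422429870 := by
  decide +kernel

theorem primeCounting_25673 : Nat.primeCounting 25673 = 2828 := by
  rw [← Nat.primesLE_card_eq_primeCounting, card_eq_sum_ones,
    sum_primesLE_eq_dyadicFold (m := 160) (d := 15) (by norm_num) (by norm_num), primorial_160]
  decide +kernel

theorem pow_lt_primorial_25673 : (2 ^ 13) ^ 2828 < primorial 25673 := by
  rw [primorial_eq_prod_primesLE,
    prod_primesLE_eq_dyadicFold (m := 160) (d := 15) (by norm_num) (by norm_num), primorial_160]
  decide +kernel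

/-- If `k` has at least `2828` distinct prime factors, then the number of squarefree divisors
`W(k) = 2^{ω(k)}` satisfies `W(k) < k^{1/13}`. -/
theorem squarefree_divisor_count_lt_of_many_primes (k : ℕ) (hk : 0 < k)
    (hω : 2828 ≤ k.primeFactors.card) :
    (2 : ℝ) ^ k.primeFactors.card < (k : ℝ) ^ ((1 : ℝ) / 13) := by
  have hpow : (2 ^ 13) ^ #k.primeFactors < k :=
    pow_card_primeFactors_lt_of_lt_primorial (N := 25673) (by norm_num)
      (primeCounting_25673 ▸ pow_lt_primorial_25673) hk.ne' (primeCounting_25673 ▸ hω)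
  rw [one_div, Real.lt_rpow_inv_iff_of_pos (by positivity) (by positivity) (by norm_num)]
  rw [Real.rpow_ofNat, ← pow_mul, mul_comm, pow_mul]
  exact_mod_cast hpow
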